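/- Let (X_i)_{i≥1} be i.i.d. standard normal, X_{(n)} = max_{1≤i≤n} X_i, a_n = √(2 log n), c_n = log(√(4π log n)), b_n = a_n - c_n/a_n, and Y_n = a_n(X_{(n)} - b_n). Then, as n → ∞, E[e^{-Y_n} - (Y_n - c_n)²/(4 log n)] = 1 + (c_n⁴/(32 (log n)²))(1 + o(1)). -/

import Mathlib

open MeasureTheory Filter Real

/-- The standard normal cumulative distribution function. -/
noncomputable def stdNormalCDF (x : ℝ) : ℝ :=
  ∫ t in Set.Iic x, Real.exp (-t ^ 2 / 2) / Real.sqrt (2 * Real.pi)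

/-- The standard normal density. -/
noncomputable def stdNormalPDF (x : ℝ) : ℝ :=
  Real.exp (-x ^ 2 / 2) / Real.sqrt (2 * Real.pi)

/-- Scaling constant `a_n = √(2 log n)`. -/
noncomputable def aSeq (n : ℕ) : ℝ := Real.sqrt (2 * Real.log n)

/-- Centering constant
`b_n = √(2 log n) - (log log n + log (4π)) / (2 √(2 log n))`. -/
noncomputable def bSeq (n : ℕ) : ℝ :=
  aSeq n - (Real.log (Real.log n) + Real.log (4 * Real.pi)) / (2 * aSeq n)

/-- `c_n = log (√(4 π log n))`. -/
noncomputable def cSeq (n : ℕ) : ℝ := Real.log (Real.sqrt (4 * Real.pi * Real.log n))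

/-- The CDF of `Y_n = a_n (X_{(n)} - b_n)` where `X_{(n)}` is the maximum of `n`
i.i.d. standard normal random variables: `P(Y_n ≤ x) = Φ(b_n + x/a_n)^n`. -/
noncomputable def Fmax (n : ℕ) (x : ℝ) : ℝ := stdNormalCDF (bSeq n + x / aSeq n) ^ n

/-- The density of `Y_n = a_n (X_{(n)} - b_n)`:
`f_n(x) = n a_n⁻¹ φ(b_n + x/a_n) Φ(b_n + x/a_n)^{n-1}`. -/
noncomputable def fmax (n : ℕ) (x : ℝ) : ℝ :=
  n * (aSeq n)⁻¹ * stdNormalPDF (bSeq n + x / aSeq n) *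
    stdNormalCDF (bSeq n + x / aSeq n) ^ (n - 1)

/-- The density of the standard Gumbel distribution. -/
noncomputable def gumbelPDF (x : ℝ) : ℝ := Real.exp (-x - Real.exp (-x))

/-- The density of `Y_n = a_n (X_{(n)} - b_n)` with `b_n = a_n - c_n/a_n`. -/
noncomputable def fmax' (n : ℕ) (x : ℝ) : ℝ :=
  n * (aSeq n)⁻¹ * stdNormalPDF (aSeq n + (x - cSeq n) / aSeq n) *
    stdNormalCDF (aSeq n + (x - cSeq n) / aSeq n) ^ (n - 1)


lemma pdf_eq (x : ℝ) : stdNormalPDF x = Real.exp (-(1 / 2) * x ^ 2) / Real.sqrt (2 * Real.pi) := by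
  unfold stdNormalPDF; congr 2; ring

lemma pdf_pos (x : ℝ) : 0 < stdNormalPDF x := by
  unfold stdNormalPDF; positivity

lemma pdf_cont : Continuous stdNormalPDF := by
  unfold stdNormalPDF; fun_prop

lemma pdf_integrable : Integrable stdNormalPDF := by
  have h := (integrable_exp_neg_mul_sq (b := 1 / 2) (by norm_num)).div_const (Real.sqrt (2 * Real.pi))
  exact h.congr (Eventually.of_forall fun x => (pdf_eq x).symm)

lemma pdf_integral : ∫ x, stdNormalPDF x = 1 := by
  simp_rw [pdf_eq]
  rw [integral_div, integral_gaussian]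
  rw [show Real.pi / (1 / 2) = 2 * Real.pi by ring]
  exact div_self (by positivity)

lemma cdf_eq (x : ℝ) : stdNormalCDF x = ∫ t in Set.Iic x, stdNormalPDF t := rfl

lemma cdf_zero : stdNormalCDF 0 = 1 / 2 := by
  rw [cdf_eq]
  have h : ∫ t in Set.Iic (0 : ℝ), stdNormalPDF t = ∫ t in Set.Ioi (0 : ℝ), stdNormalPDF t := by
    have := integral_comp_neg_Iic 0 stdNormalPDF
    rw [neg_zero] at this
    rw [← this]
    congr 1; ext t; simp [stdNormalPDF]
  rw [h]
  simp_rw [pdf_eq]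
  rw [integral_div, integral_gaussian_Ioi]
  rw [show Real.pi / (1 / 2) = 2 * Real.pi by ring]
  have : Real.sqrt (2 * Real.pi) ≠ 0 := by positivity
  field_simp

lemma cdf_hasDeriv (x : ℝ) : HasDerivAt stdNormalCDF (stdNormalPDF x) x := by
  have h : stdNormalCDF = fun y => stdNormalCDF 0 + ∫ t in (0 : ℝ)..y, stdNormalPDF t := by
    ext y
    have := intervalIntegral.integral_Iic_sub_Iic (pdf_integrable.integrableOn (s := Set.Iic 0))
      (pdf_integrable.integrableOn (s := Set.Iic y))
    rw [← this, cdf_eq, cdf_eq]; ring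
  rw [h]
  refine HasDerivAt.const_add _ ?_
  exact intervalIntegral.integral_hasDerivAt_right (pdf_integrable.intervalIntegrable)
    (pdf_cont.stronglyMeasurableAtFilter _ _) pdf_cont.continuousAt

lemma cdf_cont : Continuous stdNormalCDF :=
  continuous_iff_continuousAt.2 fun x => (cdf_hasDeriv x).continuousAt

lemma cdf_nonneg (x : ℝ) : 0 ≤ stdNormalCDF x :=
  integral_nonneg fun t => (pdf_pos t).le

lemma cdf_le_one (x : ℝ) : stdNormalCDF x ≤ 1 := by
  rw [← pdf_integral, cdf_eq]
  exact setIntegral_le_integral pdf_integrable (Eventually.of_forall fun t => (pdf_pos t).le)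

lemma cdf_mono : Monotone stdNormalCDF :=
  monotone_of_deriv_nonneg (fun x => (cdf_hasDeriv x).differentiableAt)
    fun x => by rw [(cdf_hasDeriv x).deriv]; exact (pdf_pos x).le

lemma cdf_tendsto : Tendsto stdNormalCDF atTop (nhds 1) := by
  have h := (aecover_Iic (μ := (volume : Measure ℝ)) (tendsto_id (α := ℝ) (x := atTop))).integral_tendsto_of_countably_generated
    pdf_integrable
  rw [pdf_integral] at h
  exact h

lemma cdf_le_exp {x : ℝ} (hx : x ≤ 0) : stdNormalCDF x ≤ Real.exp (-x ^ 2 / 2) := by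
  have hi : Integrable (fun t => Real.exp (-x ^ 2 / 2) * stdNormalPDF (t - x)) :=
    (pdf_integrable.comp_sub_right x).const_mul _
  calc stdNormalCDF x = ∫ t in Set.Iic x, stdNormalPDF t := rfl
    _ ≤ ∫ t in Set.Iic x, Real.exp (-x ^ 2 / 2) * stdNormalPDF (t - x) := by
      refine setIntegral_mono_on pdf_integrable.integrableOn hi.integrableOn measurableSet_Iic ?_
      intro t ht
      have ht : t ≤ x := ht
      unfold stdNormalPDF
      rw [← mul_div_assoc, ← Real.exp_add]
      gcongr
      nlinarith [mul_nonneg_of_nonpos_of_nonpos hx (sub_nonpos.2 ht)]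
    _ ≤ ∫ t, Real.exp (-x ^ 2 / 2) * stdNormalPDF (t - x) :=
      setIntegral_le_integral hi (Eventually.of_forall fun t => by
        have := pdf_pos (t - x); positivity)
    _ = Real.exp (-x ^ 2 / 2) := by
      rw [integral_const_mul, integral_sub_right_eq_self (fun t => stdNormalPDF t), pdf_integral, mul_one]

/-- the argument -/
noncomputable def Xv (n : ℕ) (y : ℝ) : ℝ := aSeq n + (y - cSeq n) / aSeq n

/-- the quadratic correction -/
noncomputable def vv (n : ℕ) (y : ℝ) : ℝ := (y - cSeq n) ^ 2 / (4 * Real.log n)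

lemma log_pos' {n : ℕ} (hn : 2 ≤ n) : 0 < Real.log n :=
  Real.log_pos (by exact_mod_cast hn)

lemma a_pos {n : ℕ} (hn : 2 ≤ n) : 0 < aSeq n := by
  have := log_pos' hn
  unfold aSeq; positivity

lemma a_sq {n : ℕ} (hn : 2 ≤ n) : aSeq n ^ 2 = 2 * Real.log n := by
  have := log_pos' hn
  unfold aSeq; rw [Real.sq_sqrt (by positivity)]

lemma vv_nonneg {n : ℕ} (hn : 2 ≤ n) (y : ℝ) : 0 ≤ vv n y := by
  have := log_pos' hn
  unfold vv; positivity

lemma dens_eq {n : ℕ} (hn : 2 ≤ n) (y : ℝ) :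
    n * (aSeq n)⁻¹ * stdNormalPDF (Xv n y) = Real.exp (-y - vv n y) := by
  have hL := log_pos' hn
  have ha := a_pos hn
  have ha2 := a_sq hn
  have hn0 : (0 : ℝ) < n := by exact_mod_cast (by omega : 0 < n)
  have hc : Real.exp (cSeq n) = aSeq n * Real.sqrt (2 * Real.pi) := by
    unfold cSeq
    rw [Real.exp_log (by positivity)]
    unfold aSeq
    rw [← Real.sqrt_mul (by positivity)]
    congr 1; ring
  have hX : -(Xv n y) ^ 2 / 2 = -Real.log n + (cSeq n - y - vv n y) := by
    unfold Xv vv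
    have : (aSeq n + (y - cSeq n) / aSeq n) ^ 2
        = aSeq n ^ 2 + 2 * (y - cSeq n) + (y - cSeq n) ^ 2 / aSeq n ^ 2 := by
      field_simp; ring
    rw [this, ha2]; field_simp; ring
  unfold stdNormalPDF
  rw [hX, Real.exp_add, Real.exp_neg, Real.exp_log hn0,
    show cSeq n - y - vv n y = cSeq n + (-y - vv n y) by ring, Real.exp_add, hc]
  have : Real.sqrt (2 * Real.pi) ≠ 0 := by positivity
  field_simp

lemma Xv_hasDeriv (n : ℕ) (y : ℝ) : HasDerivAt (Xv n) (aSeq n)⁻¹ y := by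
  have := (((hasDerivAt_id y).sub_const (cSeq n)).div_const (aSeq n)).const_add (aSeq n)
  rw [one_div] at this
  exact this

lemma Xv_cont (n : ℕ) : Continuous (Xv n) := by unfold Xv; fun_prop

lemma vv_cont (n : ℕ) : Continuous (vv n) := by unfold vv; fun_prop

lemma Xv_tendsto {n : ℕ} (hn : 2 ≤ n) : Tendsto (Xv n) atTop atTop := by
  unfold Xv
  refine tendsto_atTop_add_const_left _ _ ?_
  refine Tendsto.atTop_div_const (a_pos hn) ?_
  exact tendsto_atTop_add_const_right _ _ tendsto_id

lemma tail_hasDeriv {n : ℕ} (hn : 2 ≤ n) (y : ℝ) :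
    HasDerivAt (fun y => n * (1 - stdNormalCDF (Xv n y))) (-Real.exp (-y - vv n y)) y := by
  have h := (((cdf_hasDeriv (Xv n y)).comp y (Xv_hasDeriv n y)).const_sub 1).const_mul (n : ℝ)
  refine h.congr_deriv ?_
  rw [← dens_eq hn]; ring

lemma g_cont (n : ℕ) : Continuous fun t => Real.exp (-t - vv n t) := by
  have := vv_cont n
  fun_prop

lemma g_int {n : ℕ} (hn : 2 ≤ n) (y : ℝ) :
    IntegrableOn (fun t => Real.exp (-t - vv n t)) (Set.Ioi y) := by
  refine (integrableOn_exp_neg_Ioi y).mono' (g_cont n).aestronglyMeasurable ?_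
  refine Eventually.of_forall fun t => ?_
  rw [Real.norm_eq_abs, abs_of_pos (Real.exp_pos _)]
  have := vv_nonneg hn t
  gcongr; linarith

lemma tail_eq {n : ℕ} (hn : 2 ≤ n) (y : ℝ) :
    n * (1 - stdNormalCDF (Xv n y)) = ∫ t in Set.Ioi y, Real.exp (-t - vv n t) := by
  have hlim : Tendsto (fun y => n * (1 - stdNormalCDF (Xv n y))) atTop (nhds 0) := by
    have := ((cdf_tendsto.comp (Xv_tendsto hn)).const_sub 1).const_mul (n : ℝ)
    simpa using this
  have h := integral_Ioi_of_hasDerivAt_of_tendsto (a := y)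
    (tail_hasDeriv hn y).continuousAt.continuousWithinAt
    (fun x _ => tail_hasDeriv hn x) (g_int hn y).neg hlim
  rw [integral_neg] at h
  linarith

lemma tail_le {n : ℕ} (hn : 2 ≤ n) (y : ℝ) :
    n * (1 - stdNormalCDF (Xv n y)) ≤ Real.exp (-y) := by
  rw [tail_eq hn, ← integral_exp_neg_Ioi y]
  refine setIntegral_mono_on (g_int hn y) (integrableOn_exp_neg_Ioi y) measurableSet_Ioi ?_
  intro t _
  have := vv_nonneg hn t
  gcongr; linarith

lemma log_tendsto : Tendsto (fun n : ℕ => Real.log n) atTop atTop :=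
  Real.tendsto_log_atTop.comp tendsto_natCast_atTop_atTop

lemma c_eq {n : ℕ} (hn : 2 ≤ n) : cSeq n = (Real.log (4 * Real.pi) + Real.log (Real.log n)) / 2 := by
  have hL := log_pos' hn
  unfold cSeq
  rw [Real.log_sqrt (by positivity), Real.log_mul (by positivity) hL.ne']

lemma c_tendsto : Tendsto cSeq atTop atTop := by
  unfold cSeq
  refine Real.tendsto_log_atTop.comp ((Real.tendsto_sqrt_atTop).comp ?_)
  exact log_tendsto.const_mul_atTop (by positivity)

lemma c_sq_div : Tendsto (fun n : ℕ => cSeq n ^ 2 / Real.log n) atTop (nhds 0) := by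
  have h1 : Tendsto (fun x : ℝ => (Real.log (Real.sqrt (4 * Real.pi * x))) ^ 2 / x) atTop (nhds 0) := by
    have h2 : Tendsto (fun x : ℝ => Real.log x ^ 2 / x) atTop (nhds 0) :=
      (Real.isLittleO_pow_log_id_atTop (n := 2)).tendsto_div_nhds_zero
    have h3 : Tendsto (fun x : ℝ => 4 * Real.pi * x) atTop atTop :=
      tendsto_id.const_mul_atTop (by positivity)
    have h4 := (h2.comp h3).const_mul (Real.pi)
    rw [mul_zero] at h4
    refine h4.congr' ?_
    filter_upwards [eventually_gt_atTop 0] with x hx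
    simp only [Function.comp]
    rw [Real.log_sqrt (by positivity)]
    field_simp
    norm_num; ring
  exact h1.comp log_tendsto

lemma vv_tendsto (y : ℝ) : Tendsto (fun n => vv n y) atTop (nhds 0) := by
  have h1 := c_sq_div
  have h2 : Tendsto (fun n : ℕ => y / cSeq n - 1) atTop (nhds (0 - 1)) :=
    (c_tendsto.const_div_atTop y).sub_const 1
  have h := ((h2.pow 2).mul h1).mul_const (1 / 4)
  rw [mul_zero, zero_mul] at h
  refine h.congr' ?_
  filter_upwards [c_tendsto.eventually_gt_atTop 0, eventually_ge_atTop 2] with n hc hn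
  have := log_pos' hn
  unfold vv
  field_simp

lemma tail_tendsto (y : ℝ) :
    Tendsto (fun n : ℕ => n * (1 - stdNormalCDF (Xv n y))) atTop (nhds (Real.exp (-y))) := by
  rw [← integral_exp_neg_Ioi y]
  have h : Tendsto (fun n : ℕ => ∫ t in Set.Ioi y, Real.exp (-t - vv n t)) atTop
      (nhds (∫ t in Set.Ioi y, Real.exp (-t))) := by
    refine tendsto_integral_filter_of_dominated_convergence (fun t => Real.exp (-t)) ?_ ?_
      (integrableOn_exp_neg_Ioi y) ?_
    · exact Eventually.of_forall fun n => (g_cont n).aestronglyMeasurable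
    · filter_upwards [eventually_ge_atTop 2] with n hn
      refine Eventually.of_forall fun t => ?_
      rw [Real.norm_eq_abs, abs_of_pos (Real.exp_pos _)]
      have := vv_nonneg hn t
      gcongr; linarith
    · refine Eventually.of_forall fun t => ?_
      have := ((vv_tendsto t).const_sub (-t)).rexp
      simpa using this
  refine h.congr' ?_
  filter_upwards [eventually_ge_atTop 2] with n hn
  rw [tail_eq hn]

lemma cdf_tendsto_one (y : ℝ) : Tendsto (fun n : ℕ => stdNormalCDF (Xv n y)) atTop (nhds 1) := by
  have h := (tail_tendsto y).div_atTop (tendsto_natCast_atTop_atTop (R := ℝ))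
  have h' := h.const_sub 1
  rw [sub_zero] at h'
  refine h'.congr' ?_
  filter_upwards [eventually_ge_atTop 2] with n hn
  have hn0 : (n : ℝ) ≠ 0 := by exact_mod_cast (by omega : n ≠ 0)
  field_simp; ring

lemma pow_tendsto (y : ℝ) :
    Tendsto (fun n : ℕ => stdNormalCDF (Xv n y) ^ (n - 1)) atTop (nhds (Real.exp (-Real.exp (-y)))) := by
  have h := Real.tendsto_one_add_pow_exp_of_tendsto (g := fun n => -(1 - stdNormalCDF (Xv n y)))
    (t := -Real.exp (-y)) (by
      refine (tail_tendsto y).neg.congr fun n => ?_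
      ring)
  have h2 := h.div (cdf_tendsto_one y) one_ne_zero
  rw [div_one] at h2
  refine h2.congr' ?_
  filter_upwards [eventually_ge_atTop 2, (cdf_tendsto_one y).eventually (lt_mem_nhds zero_lt_one)] with n hn hp
  obtain ⟨m, rfl⟩ : ∃ m, n = m + 1 := ⟨n - 1, by omega⟩
  simp only [Pi.div_apply]
  rw [show 1 + -(1 - stdNormalCDF (Xv (m+1) y)) = stdNormalCDF (Xv (m+1) y) by ring, pow_succ,
    Nat.add_sub_cancel, mul_div_assoc, div_self hp.ne', mul_one]

lemma psi_upper {v : ℝ} (hv : 0 ≤ v) : 1 - (1 + v) * Real.exp (-v) ≤ v ^ 2 / 2 := by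
  have hd : ∀ x : ℝ, HasDerivAt (fun v => (1 + v) * Real.exp (-v) + v ^ 2 / 2)
      (x * (1 - Real.exp (-x))) x := by
    intro x
    have h1 := ((hasDerivAt_id x).const_add 1).mul ((hasDerivAt_neg x).exp)
    have h2 := (hasDerivAt_pow 2 x).div_const 2
    refine (h1.add h2).congr_deriv ?_
    simp; ring
  have hm : MonotoneOn (fun v => (1 + v) * Real.exp (-v) + v ^ 2 / 2) (Set.Ici 0) := by
    refine monotoneOn_of_deriv_nonneg (convex_Ici 0)
      (fun x _ => (hd x).continuousAt.continuousWithinAt)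
      (fun x _ => (hd x).differentiableAt.differentiableWithinAt) ?_
    intro x hx
    rw [interior_Ici] at hx
    have hx : 0 < x := hx
    rw [(hd x).deriv]
    have : Real.exp (-x) ≤ 1 := Real.exp_le_one_iff.2 (by linarith)
    exact mul_nonneg hx.le (by linarith)
  have := hm (Set.self_mem_Ici) hv hv
  simp at this
  linarith

lemma psi_lower {v : ℝ} (hv : 0 ≤ v) :
    Real.exp (-v) * (v ^ 2 / 2) ≤ 1 - (1 + v) * Real.exp (-v) := by
  have h := Real.quadratic_le_exp_of_nonneg hv
  have h2 : Real.exp (-v) * Real.exp v = 1 := by rw [← Real.exp_add]; simp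
  have h3 := mul_le_mul_of_nonneg_left h (Real.exp_pos (-v)).le
  nlinarith

lemma tail_lower {n : ℕ} (hn : 2 ≤ n) (hc0 : 0 ≤ cSeq n) (hc1 : cSeq n ≤ Real.log n / 2)
    (hc2 : cSeq n ^ 2 ≤ 4 * Real.log n) {y : ℝ} (hy : y ≤ 0) (hy2 : cSeq n - 2 * Real.log n ≤ y) :
    4 * Real.exp (-1) * (Real.exp (-y / 4) - 1) ≤ n * (1 - stdNormalCDF (Xv n y)) := by
  have hL := log_pos' hn
  have hd : ∀ x : ℝ, HasDerivAt (fun y => n * (1 - stdNormalCDF (Xv n y))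
      - 4 * Real.exp (-1) * (Real.exp (-y / 4) - 1))
      (-Real.exp (-x - vv n x) + Real.exp (-1) * Real.exp (-x / 4)) x := by
    intro x
    have h1 := ((((hasDerivAt_neg x).div_const 4).exp).sub_const 1).const_mul (4 * Real.exp (-1))
    refine ((tail_hasDeriv hn x).sub h1).congr_deriv ?_
    ring
  have hm : AntitoneOn (fun y => n * (1 - stdNormalCDF (Xv n y))
      - 4 * Real.exp (-1) * (Real.exp (-y / 4) - 1)) (Set.Icc y 0) := by
    refine antitoneOn_of_deriv_nonpos (convex_Icc y 0)
      (fun x _ => (hd x).continuousAt.continuousWithinAt)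
      (fun x _ => (hd x).differentiableAt.differentiableWithinAt) ?_
    intro x hx
    rw [interior_Icc] at hx
    rw [(hd x).deriv, ← Real.exp_add]
    have : Real.exp (-1 + -x / 4) ≤ Real.exp (-x - vv n x) := by
      apply Real.exp_le_exp.2
      have h1 : vv n x ≤ 1 - 3 * x / 4 := by
        unfold vv
        rw [div_le_iff₀ (by positivity)]
        have hx0 : 0 ≤ -x := by linarith [hx.2]
        have hxL : 0 ≤ 2 * Real.log n + x := by linarith [hx.1]
        nlinarith [mul_nonneg hx0 hxL, mul_nonneg hx0 (sub_nonneg.2 hc1)]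
      linarith
    linarith
  have h := hm (Set.left_mem_Icc.2 hy) (Set.right_mem_Icc.2 hy) hy
  have h0 : (0 : ℝ) ≤ n * (1 - stdNormalCDF (Xv n 0)) :=
    mul_nonneg (Nat.cast_nonneg n) (by linarith [cdf_le_one (Xv n 0)])
  simp only [neg_zero, zero_div, Real.exp_zero, sub_self, mul_zero, sub_zero] at h
  linarith

lemma pow_bound : ∃ K : ℝ, 1 ≤ K ∧ ∀ᶠ n : ℕ in atTop, ∀ y ≤ 0,
    stdNormalCDF (Xv n y) ^ (n - 1) ≤ K * Real.exp (4 * y) := by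
  set κ : ℝ := Real.exp (-1) with hκ
  have hκ0 : 0 < κ := Real.exp_pos _
  set K1 : ℝ := Real.exp (2 * κ) * ((Nat.factorial 16 : ℝ) / (2 * κ) ^ 16) with hK1
  refine ⟨max 1 K1, le_max_left _ _, ?_⟩
  have e1 : ∀ᶠ n : ℕ in atTop, cSeq n ^ 2 / Real.log n < 1 / 4 :=
    c_sq_div.eventually (gt_mem_nhds (by norm_num))
  have e2 : ∀ᶠ n : ℕ in atTop, (n : ℝ) ^ 12 * (1 / 2 : ℝ) ^ n < 1 / 32 :=
    (tendsto_pow_const_mul_const_pow_of_abs_lt_one 12 (r := 1 / 2)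
      (by rw [abs_of_pos] <;> norm_num)).eventually (gt_mem_nhds (by norm_num))
  filter_upwards [e1, e2, c_tendsto.eventually_ge_atTop 1, eventually_ge_atTop 6] with n h1 h2 hc hn
  intro y hy
  have hn2 : 2 ≤ n := by omega
  have hL := log_pos' hn2
  have ha := a_pos hn2
  have ha2 := a_sq hn2
  have hn0 : (0 : ℝ) < n := by exact_mod_cast (by omega : 0 < n)
  rw [div_lt_iff₀ hL] at h1
  have hP0 := cdf_nonneg (Xv n y)
  have hP1 := cdf_le_one (Xv n y)
  rcases le_total (cSeq n - 2 * Real.log n) y with hy2 | hy2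
  · have ht := tail_lower hn2 (by linarith) (by nlinarith) (by nlinarith) hy hy2
    rw [← hκ] at ht
    have hz : 0 < 2 * κ * Real.exp (-y / 4) := by positivity
    calc stdNormalCDF (Xv n y) ^ (n - 1) ≤ (Real.exp (-(1 - stdNormalCDF (Xv n y)))) ^ (n - 1) := by
          gcongr
          have := Real.add_one_le_exp (-(1 - stdNormalCDF (Xv n y)))
          linarith
      _ = Real.exp (((n - 1 : ℕ) : ℝ) * (-(1 - stdNormalCDF (Xv n y)))) := by
          rw [← Real.exp_nat_mul]
      _ ≤ Real.exp (2 * κ - 2 * κ * Real.exp (-y / 4)) := by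
          apply Real.exp_le_exp.2
          have hcast : ((n - 1 : ℕ) : ℝ) = n - 1 := by
            rw [Nat.cast_sub (by omega)]; simp
          rw [hcast]
          have hn6 : (6 : ℝ) ≤ n := by exact_mod_cast hn
          nlinarith
      _ = Real.exp (2 * κ) * (Real.exp (2 * κ * Real.exp (-y / 4)))⁻¹ := by
          rw [sub_eq_add_neg, Real.exp_add, Real.exp_neg (2 * κ * Real.exp (-y / 4))]
      _ ≤ Real.exp (2 * κ) * ((2 * κ * Real.exp (-y / 4)) ^ 16 / (Nat.factorial 16 : ℝ))⁻¹ := by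
          gcongr
          exact Real.pow_div_factorial_le_exp _ hz.le 16
      _ = K1 * Real.exp (4 * y) := by
          rw [hK1, mul_pow, ← Real.exp_nat_mul, inv_div, mul_assoc]
          congr 1
          rw [← div_div, div_eq_mul_inv (_ / _) (Real.exp _), ← Real.exp_neg]
          congr 2
          push_cast; ring
      _ ≤ max 1 K1 * Real.exp (4 * y) := by
          gcongr
          exact le_max_right _ _
  · have hX : Xv n y * aSeq n = 2 * Real.log n + (y - cSeq n) := by
      unfold Xv; rw [← ha2]; field_simp
    have hX0 : Xv n y ≤ 0 := by
      by_contra h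
      push Not at h
      have := mul_pos h ha
      linarith
    have hhalf : stdNormalCDF (Xv n y) ≤ 1 / 2 := by
      rw [← cdf_zero]; exact cdf_mono hX0
    have hexp := cdf_le_exp hX0
    have h3 : (1 / 2 : ℝ) ^ (n - 5) ≤ Real.exp (-12 * Real.log n) := by
      have : Real.exp (-12 * Real.log n) = ((n : ℝ) ^ 12)⁻¹ := by
        rw [show -12 * Real.log n = -((12 : ℕ) * Real.log n) by push_cast; ring, Real.exp_neg,
          Real.exp_nat_mul, Real.exp_log hn0]
      rw [this]
      have h5 : (1 / 2 : ℝ) ^ n = (1 / 2) ^ (n - 5) * (1 / 2) ^ 5 := by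
        rw [← pow_add]; congr 1; omega
      rw [h5] at h2
      rw [← one_div, le_div_iff₀ (by positivity)]
      norm_num at h2 ⊢
      linarith
    calc stdNormalCDF (Xv n y) ^ (n - 1)
        = stdNormalCDF (Xv n y) ^ 4 * stdNormalCDF (Xv n y) ^ (n - 5) := by
          rw [← pow_add]; congr 1; omega
      _ ≤ (Real.exp (-(Xv n y) ^ 2 / 2)) ^ 4 * (1 / 2) ^ (n - 5) := by gcongr
      _ ≤ (Real.exp (-(Xv n y) ^ 2 / 2)) ^ 4 * Real.exp (-12 * Real.log n) := by gcongr
      _ = Real.exp (-2 * (Xv n y) ^ 2 - 12 * Real.log n) := by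
          rw [← Real.exp_nat_mul, ← Real.exp_add]; congr 1; push_cast; ring
      _ ≤ Real.exp (4 * y) := by
          apply Real.exp_le_exp.2
          nlinarith [sq_nonneg (Xv n y + aSeq n)]
      _ ≤ max 1 K1 * Real.exp (4 * y) :=
          le_mul_of_one_le_left (Real.exp_pos _).le (le_max_left _ _)

lemma poly_bound (y : ℝ) : (1 + |y|) ^ 4 ≤ 384 * Real.exp (1 / 2) * Real.exp (|y| / 2) := by
  have h := Real.pow_div_factorial_le_exp ((1 + |y|) / 2) (by positivity) 4
  rw [mul_assoc, ← Real.exp_add, show 1 / 2 + |y| / 2 = (1 + |y|) / 2 by ring]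
  norm_num [Nat.factorial] at h
  nlinarith

lemma dom_bound : ∃ M : ℝ, 0 < M ∧ ∀ᶠ n : ℕ in atTop, ∀ y : ℝ,
    ((1 + |y|) ^ 4 + Real.exp (-y) + 1) * (Real.exp (-y) * stdNormalCDF (Xv n y) ^ (n - 1))
      ≤ M * Real.exp (-|y| / 2) := by
  obtain ⟨K, hK1, hK⟩ := pow_bound
  set A : ℝ := 384 * Real.exp (1 / 2) with hA
  have hA0 : 0 < A := by positivity
  refine ⟨(A + 2) * K, by positivity, ?_⟩
  filter_upwards [hK] with n hn y
  have hp := poly_bound y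
  rw [← hA] at hp
  have hP0 := pow_nonneg (cdf_nonneg (Xv n y)) (n - 1)
  have hP1 := pow_le_one₀ (n := n - 1) (cdf_nonneg (Xv n y)) (cdf_le_one (Xv n y))
  rcases le_total 0 y with hy | hy
  · rw [abs_of_nonneg hy] at *
    have h1 : Real.exp (-y) ≤ 1 := Real.exp_le_one_iff.2 (by linarith)
    have h2 : 1 ≤ Real.exp (y / 2) := Real.one_le_exp_iff.2 (by linarith)
    calc _ ≤ ((A + 2) * Real.exp (y / 2)) * (Real.exp (-y) * 1) := by
          gcongr
          linarith
      _ = (A + 2) * Real.exp (-y / 2) := by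
          rw [mul_one, mul_assoc, ← Real.exp_add]; congr 2; ring
      _ ≤ _ := by
          gcongr
          exact le_mul_of_one_le_right (by positivity) hK1
  · rw [abs_of_nonpos hy] at *
    have h1 : 1 ≤ Real.exp (-y) := Real.one_le_exp_iff.2 (by linarith)
    have h2 : Real.exp (-y / 2) ≤ Real.exp (-y) := Real.exp_le_exp.2 (by linarith)
    calc _ ≤ ((A + 2) * Real.exp (-y)) * (Real.exp (-y) * (K * Real.exp (4 * y))) := by
          gcongr
          · nlinarith
          · exact hn y hy
      _ = (A + 2) * K * (Real.exp (-y) * Real.exp (-y) * Real.exp (4 * y)) := by ring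
      _ = (A + 2) * K * Real.exp (2 * y) := by
          rw [← Real.exp_add, ← Real.exp_add]; congr 2; ring
      _ ≤ _ := by
          gcongr
          linarith

lemma exp_abs_int : Integrable fun y : ℝ => Real.exp (-|y| / 2) := by
  rw [← integrableOn_univ, ← Set.Iic_union_Ioi (a := (0 : ℝ))]
  refine IntegrableOn.union ?_ ?_
  · refine (integrableOn_exp_mul_Iic (a := 1 / 2) (by norm_num) 0).congr_fun ?_ measurableSet_Iic
    intro y hy
    simp only
    rw [abs_of_nonpos hy]; congr 1; ring
  · refine (exp_neg_integrableOn_Ioi 0 (b := 1 / 2) (by norm_num)).congr_fun ?_ measurableSet_Ioi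
    intro y hy
    simp only
    rw [abs_of_pos hy]; congr 1; ring

lemma gumbel_int : ∫ y : ℝ, Real.exp (-y) * Real.exp (-Real.exp (-y)) = 1 := by
  have hd : ∀ y : ℝ, HasDerivAt (fun y => Real.exp (-Real.exp (-y)))
      (Real.exp (-y) * Real.exp (-Real.exp (-y))) y := by
    intro y
    refine ((hasDerivAt_neg y).exp.neg.exp).congr_deriv ?_
    simp only [Pi.neg_apply]
    ring
  have hbot : Tendsto (fun y : ℝ => Real.exp (-Real.exp (-y))) atBot (nhds 0) :=
    Real.tendsto_exp_neg_atTop_nhds_zero.comp (Real.tendsto_exp_atTop.comp tendsto_neg_atBot_atTop)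
  have htop : Tendsto (fun y : ℝ => Real.exp (-Real.exp (-y))) atTop (nhds 1) := by
    have := (Real.tendsto_exp_neg_atTop_nhds_zero).neg.rexp
    simpa using this
  have hi : Integrable (fun y : ℝ => Real.exp (-y) * Real.exp (-Real.exp (-y))) := by
    refine (exp_abs_int.const_mul 2).mono' (by fun_prop) ?_
    refine Eventually.of_forall fun y => ?_
    rw [Real.norm_eq_abs, abs_of_pos (by positivity)]
    rcases le_total 0 y with hy | hy
    · rw [abs_of_nonneg hy]
      have h1 : Real.exp (-y) ≤ Real.exp (-y / 2) := Real.exp_le_exp.2 (by linarith)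
      have h2 : Real.exp (-Real.exp (-y)) ≤ 1 := Real.exp_le_one_iff.2 (by linarith [Real.exp_pos (-y)])
      nlinarith [Real.exp_pos (-y)]
    · rw [abs_of_nonpos hy, neg_neg]
      have h := Real.pow_div_factorial_le_exp (Real.exp (-y)) (Real.exp_pos _).le 2
      have h2 : Real.exp (-Real.exp (-y)) ≤ ((Real.exp (-y)) ^ 2 / 2)⁻¹ := by
        rw [Real.exp_neg (Real.exp (-y))]
        gcongr
        simpa [Nat.factorial] using h
      calc _ ≤ Real.exp (-y) * ((Real.exp (-y)) ^ 2 / 2)⁻¹ := by gcongr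
        _ = 2 * Real.exp y := by
          have : Real.exp y = (Real.exp (-y))⁻¹ := by rw [Real.exp_neg, inv_inv]
          rw [this]
          have := (Real.exp_pos (-y)).ne'
          field_simp
        _ ≤ _ := by gcongr; linarith
  rw [integral_of_hasDerivAt_of_tendsto hd hi hbot htop, sub_zero]

lemma fmax_eq {n : ℕ} (hn : 2 ≤ n) (y : ℝ) :
    fmax' n y = Real.exp (-y - vv n y) * stdNormalCDF (Xv n y) ^ (n - 1) := by
  rw [← dens_eq hn]; rfl

/-- the remainder integrand -/
noncomputable def Rn (n : ℕ) (y : ℝ) : ℝ :=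
  (stdNormalCDF (Xv n y) - (1 + vv n y) * Real.exp (-vv n y)) *
    (Real.exp (-y) * stdNormalCDF (Xv n y) ^ (n - 1))

lemma Rn_cont (n : ℕ) : Continuous (Rn n) := by
  unfold Rn
  have := vv_cont n
  have := cdf_cont.comp (Xv_cont n)
  simp only [Function.comp_def] at this
  fun_prop

lemma Rn_bound {n : ℕ} (hn : 2 ≤ n) (hc : 1 ≤ cSeq n) (hln : 32 * Real.log n ^ 2 ≤ n) (y : ℝ) :
    |Rn n y| ≤ (cSeq n ^ 4 / (32 * Real.log n ^ 2)) * (((1 + |y|) ^ 4 + Real.exp (-y) + 1) *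
      (Real.exp (-y) * stdNormalCDF (Xv n y) ^ (n - 1))) := by
  have hL := log_pos' hn
  have hn0 : (0 : ℝ) < n := by exact_mod_cast (by omega : 0 < n)
  have hP0 := pow_nonneg (cdf_nonneg (Xv n y)) (n - 1)
  have hv := vv_nonneg hn y
  have ht := tail_le hn y
  have hcdf := cdf_le_one (Xv n y)
  have hu := psi_upper hv
  have hl : 0 ≤ 1 - (1 + vv n y) * Real.exp (-vv n y) := le_trans (by positivity) (psi_lower hv)
  unfold Rn
  rw [abs_mul, abs_of_nonneg (mul_nonneg (Real.exp_pos (-y)).le hP0), ← mul_assoc (cSeq n ^ 4 / (32 * Real.log n ^ 2))]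
  refine mul_le_mul_of_nonneg_right ?_ (mul_nonneg (Real.exp_pos (-y)).le hP0)
  have h1 : vv n y ^ 2 / 2 ≤ (cSeq n ^ 4 / (32 * Real.log n ^ 2)) * (1 + |y|) ^ 4 := by
    have : vv n y ^ 2 / 2 = (|y - cSeq n|) ^ 4 / (32 * Real.log n ^ 2) := by
      unfold vv
      rw [show |y - cSeq n| ^ 4 = (|y - cSeq n| ^ 2) ^ 2 by ring, sq_abs]
      field_simp; norm_num; ring
    rw [this, div_mul_eq_mul_div, ← mul_pow]
    gcongr
    have h2 : |y - cSeq n| ≤ |y| + |cSeq n| := abs_sub _ _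
    rw [abs_of_nonneg (by linarith : 0 ≤ cSeq n)] at h2
    nlinarith [abs_nonneg y]
  have h3 : 1 - stdNormalCDF (Xv n y) ≤ (cSeq n ^ 4 / (32 * Real.log n ^ 2)) * Real.exp (-y) := by
    have h4 : 1 - stdNormalCDF (Xv n y) ≤ Real.exp (-y) / n := by
      rw [le_div_iff₀ hn0]; linarith
    refine h4.trans ?_
    rw [div_mul_eq_mul_div]
    have h5 : 1 ≤ cSeq n ^ 4 := one_le_pow₀ hc
    gcongr
    exact le_mul_of_one_le_left (Real.exp_pos _).le h5
  have h6 : 0 ≤ cSeq n ^ 4 / (32 * Real.log n ^ 2) := by positivity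
  rw [abs_le]
  constructor <;> nlinarith

lemma Rn_int {n : ℕ} (hn : 2 ≤ n) (hc : 1 ≤ cSeq n) (hln : 32 * Real.log n ^ 2 ≤ n) {M : ℝ}
    (hM : ∀ y : ℝ,
      ((1 + |y|) ^ 4 + Real.exp (-y) + 1) * (Real.exp (-y) * stdNormalCDF (Xv n y) ^ (n - 1))
      ≤ M * Real.exp (-|y| / 2)) : Integrable (Rn n) := by
  refine ((exp_abs_int.const_mul M).const_mul (cSeq n ^ 4 / (32 * Real.log n ^ 2))).mono'
    (Rn_cont n).aestronglyMeasurable (Eventually.of_forall fun y => ?_)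
  refine (Rn_bound hn hc hln y).trans ?_
  have := log_pos' hn
  exact mul_le_mul_of_nonneg_left (hM y) (by positivity)

lemma int_eq {n : ℕ} (hn : 2 ≤ n) (hc : 1 ≤ cSeq n) (hln : 32 * Real.log n ^ 2 ≤ n) {M : ℝ}
    (hM : ∀ y : ℝ,
      ((1 + |y|) ^ 4 + Real.exp (-y) + 1) * (Real.exp (-y) * stdNormalCDF (Xv n y) ^ (n - 1))
      ≤ M * Real.exp (-|y| / 2)) :
    (∫ x : ℝ, (Real.exp (-x) - (x - cSeq n) ^ 2 / (4 * Real.log n)) * fmax' n x) - 1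
      = ∫ y, Rn n y := by
  set Q : ℝ → ℝ := fun y => -Real.exp (-y) * stdNormalCDF (Xv n y) ^ n
    + (1 + Real.exp (-y)) * (Real.exp (-y - vv n y) * stdNormalCDF (Xv n y) ^ (n - 1)) with hQ
  have hpow : ∀ y, stdNormalCDF (Xv n y) ^ n
      = stdNormalCDF (Xv n y) * stdNormalCDF (Xv n y) ^ (n - 1) := by
    intro y; rw [← pow_succ']; congr 1; omega
  have hd : ∀ y, HasDerivAt (fun y => (1 + Real.exp (-y)) * stdNormalCDF (Xv n y) ^ n) (Q y) y := by
    intro y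
    have h1 := ((hasDerivAt_neg y).exp.const_add 1).mul
      (((cdf_hasDeriv (Xv n y)).comp y (Xv_hasDeriv n y)).pow n)
    refine h1.congr_deriv ?_
    simp only [hQ, Function.comp, Pi.pow_apply]
    rw [← dens_eq hn]; ring
  have hQc : Continuous Q := by
    have := vv_cont n
    have := cdf_cont.comp (Xv_cont n)
    simp only [Function.comp_def] at this
    fun_prop
  have hQi : Integrable Q := by
    refine (exp_abs_int.const_mul (2 * M)).mono' hQc.aestronglyMeasurable
      (Eventually.of_forall fun y => ?_)
    have hP0 := pow_nonneg (cdf_nonneg (Xv n y)) (n - 1)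
    have hm := hM y
    set p := stdNormalCDF (Xv n y) ^ (n - 1) with hp
    have he := Real.exp_pos (-y)
    have hw : 0 ≤ Real.exp (-y) * p := by positivity
    have ha : 0 ≤ (1 + |y|) ^ 4 := by positivity
    have h1 : |-Real.exp (-y) * stdNormalCDF (Xv n y) ^ n| ≤ Real.exp (-y) * p := by
      rw [hpow, ← hp, neg_mul, abs_neg, abs_of_nonneg (by have := cdf_nonneg (Xv n y); positivity)]
      gcongr
      exact mul_le_of_le_one_left hP0 (cdf_le_one _)
    have h2 : |(1 + Real.exp (-y)) * (Real.exp (-y - vv n y) * p)|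
        ≤ (1 + Real.exp (-y)) * (Real.exp (-y) * p) := by
      rw [abs_of_nonneg (by positivity)]
      have := vv_nonneg hn y
      gcongr
      linarith
    have h3 := abs_add_le (-Real.exp (-y) * stdNormalCDF (Xv n y) ^ n)
      ((1 + Real.exp (-y)) * (Real.exp (-y - vv n y) * p))
    rw [Real.norm_eq_abs]
    simp only [hQ]
    nlinarith [mul_nonneg ha hw, mul_nonneg he.le hw]
  have hbot : Tendsto (fun y => (1 + Real.exp (-y)) * stdNormalCDF (Xv n y) ^ n) atBot (nhds 0) := by
    have hz : Tendsto (fun y : ℝ => M * Real.exp (y / 2)) atBot (nhds 0) := by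
      have : Tendsto (fun y : ℝ => Real.exp (y / 2)) atBot (nhds 0) :=
        Real.tendsto_exp_atBot.comp (tendsto_id.atBot_div_const (by norm_num))
      simpa using this.const_mul M
    refine tendsto_of_tendsto_of_tendsto_of_le_of_le' tendsto_const_nhds hz ?_ ?_
    · refine Eventually.of_forall fun y => ?_
      have := pow_nonneg (cdf_nonneg (Xv n y)) n
      positivity
    · filter_upwards [eventually_le_atBot 0] with y hy
      have hP0 := pow_nonneg (cdf_nonneg (Xv n y)) (n - 1)
      have hm := hM y
      rw [abs_of_nonpos hy, neg_neg] at hm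
      refine le_trans ?_ hm
      have h1 : 1 ≤ Real.exp (-y) := Real.one_le_exp_iff.2 (by linarith)
      have h4 : 0 ≤ (1 + -y) ^ 4 := by positivity
      rw [hpow]
      refine mul_le_mul (by linarith) ?_ (mul_nonneg (cdf_nonneg _) hP0) (by positivity)
      exact mul_le_mul_of_nonneg_right ((cdf_le_one _).trans h1) hP0
  have htop : Tendsto (fun y => (1 + Real.exp (-y)) * stdNormalCDF (Xv n y) ^ n) atTop (nhds 1) := by
    have h := (Real.tendsto_exp_neg_atTop_nhds_zero.const_add 1).mul
      ((cdf_tendsto.comp (Xv_tendsto hn)).pow n)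
    simpa using h
  have hQ1 : ∫ y, Q y = 1 := by
    rw [integral_of_hasDerivAt_of_tendsto hd hQi hbot htop, sub_zero]
  have hsum : (fun x : ℝ => (Real.exp (-x) - (x - cSeq n) ^ 2 / (4 * Real.log n)) * fmax' n x)
      = fun x => Q x + Rn n x := by
    ext x
    rw [fmax_eq hn]
    simp only [hQ, Rn]
    rw [show (x - cSeq n) ^ 2 / (4 * Real.log n) = vv n x from rfl, hpow,
      show -x - vv n x = -x + -vv n x by ring, Real.exp_add]
    ring
  rw [hsum, integral_add hQi (Rn_int hn hc hln hM), hQ1]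
  ring

lemma Rn_tendsto (y : ℝ) : Tendsto (fun n : ℕ => Rn n y / (cSeq n ^ 4 / (32 * Real.log n ^ 2))) atTop
    (nhds (Real.exp (-y) * Real.exp (-Real.exp (-y)))) := by
  -- main part
  have hr : Tendsto (fun n : ℕ => (y / cSeq n - 1) ^ 4) atTop (nhds 1) := by
    have := (((c_tendsto.const_div_atTop y).sub_const 1).pow 4)
    norm_num at this
    exact this
  have hpsi : Tendsto (fun n : ℕ => (1 - (1 + vv n y) * Real.exp (-vv n y)) /
      (cSeq n ^ 4 / (32 * Real.log n ^ 2))) atTop (nhds 1) := by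
    have hlow : Tendsto (fun n : ℕ => Real.exp (-vv n y) * (y / cSeq n - 1) ^ 4) atTop (nhds 1) := by
      have := ((vv_tendsto y).neg.rexp).mul hr
      simpa using this
    have hkey : ∀ᶠ n : ℕ in atTop, 2 ≤ n ∧ 0 < cSeq n ∧
        vv n y ^ 2 / 2 = (y / cSeq n - 1) ^ 4 * (cSeq n ^ 4 / (32 * Real.log n ^ 2)) := by
      filter_upwards [eventually_ge_atTop 2, c_tendsto.eventually_gt_atTop 0] with n hn hc
      refine ⟨hn, hc, ?_⟩
      have := log_pos' hn
      unfold vv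
      field_simp; norm_num; ring
    refine tendsto_of_tendsto_of_tendsto_of_le_of_le' hlow hr ?_ ?_
    · filter_upwards [hkey] with n ⟨hn, hc, h⟩
      have := log_pos' hn
      rw [le_div_iff₀ (by positivity), mul_assoc, ← h]
      exact psi_lower (vv_nonneg hn y)
    · filter_upwards [hkey] with n ⟨hn, hc, h⟩
      have := log_pos' hn
      rw [div_le_iff₀ (by positivity), ← h]
      exact psi_upper (vv_nonneg hn y)
  have hlog : Tendsto (fun n : ℕ => Real.log n ^ 2 / n) atTop (nhds 0) :=
    ((Real.isLittleO_pow_log_id_atTop (n := 2)).tendsto_div_nhds_zero).comp tendsto_natCast_atTop_atTop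
  have htail : Tendsto (fun n : ℕ => (1 - stdNormalCDF (Xv n y)) /
      (cSeq n ^ 4 / (32 * Real.log n ^ 2))) atTop (nhds 0) := by
    have hc4 : Tendsto (fun n => (cSeq n ^ 4)⁻¹) atTop (nhds 0) :=
      ((tendsto_pow_atTop (by norm_num)).comp c_tendsto).inv_tendsto_atTop
    have h := (((tail_tendsto y).mul hlog).mul hc4).const_mul 32
    simp only [mul_zero] at h
    refine h.congr' ?_
    filter_upwards [eventually_ge_atTop 2, c_tendsto.eventually_gt_atTop 0] with n hn hc
    have := log_pos' hn
    have hn0 : (n : ℝ) ≠ 0 := by exact_mod_cast (by omega : n ≠ 0)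
    field_simp
  have h := (hpsi.sub htail).mul ((pow_tendsto y).const_mul (Real.exp (-y)))
  rw [sub_zero, one_mul] at h
  refine h.congr fun n => ?_
  unfold Rn
  ring

/-- Asymptotics of `E[e^{-Y_n} - (Y_n - c_n)²/(4 log n)]`:
it equals `1 + (c_n⁴/(32 (log n)²)) (1 + o(1))` as `n → ∞`. -/
theorem expectation_exp_asymptotic :
    Tendsto (fun n : ℕ =>
        ((∫ x : ℝ, (Real.exp (-x) - (x - cSeq n) ^ 2 / (4 * Real.log n)) * fmax' n x) - 1) /
          ((cSeq n) ^ 4 / (32 * (Real.log n) ^ 2)))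
      atTop (nhds 1) := by
  obtain ⟨M, hM0, hM⟩ := dom_bound
  have hlog : Tendsto (fun n : ℕ => Real.log n ^ 2 / n) atTop (nhds 0) :=
    ((Real.isLittleO_pow_log_id_atTop (n := 2)).tendsto_div_nhds_zero).comp tendsto_natCast_atTop_atTop
  have hev : ∀ᶠ n : ℕ in atTop, 2 ≤ n ∧ 1 ≤ cSeq n ∧ 32 * Real.log n ^ 2 ≤ n ∧ ∀ y : ℝ,
      ((1 + |y|) ^ 4 + Real.exp (-y) + 1) * (Real.exp (-y) * stdNormalCDF (Xv n y) ^ (n - 1))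
      ≤ M * Real.exp (-|y| / 2) := by
    filter_upwards [hM, eventually_ge_atTop 2, c_tendsto.eventually_ge_atTop 1,
      hlog.eventually (gt_mem_nhds (by norm_num : (0 : ℝ) < 1 / 32))] with n h1 h2 h3 h4
    refine ⟨h2, h3, ?_, h1⟩
    have hn0 : (0 : ℝ) < n := by exact_mod_cast (by omega : 0 < n)
    rw [div_lt_iff₀ hn0] at h4
    linarith
  have hmain : Tendsto (fun n : ℕ => ∫ y, Rn n y / (cSeq n ^ 4 / (32 * Real.log n ^ 2))) atTop
      (nhds (∫ y : ℝ, Real.exp (-y) * Real.exp (-Real.exp (-y)))) := by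
    refine tendsto_integral_filter_of_dominated_convergence (fun y => M * Real.exp (-|y| / 2)) ?_ ?_
      (exp_abs_int.const_mul M) (Eventually.of_forall Rn_tendsto)
    · exact Eventually.of_forall fun n => ((Rn_cont n).div_const _).aestronglyMeasurable
    · filter_upwards [hev] with n ⟨hn, hc, hln, hm⟩
      refine Eventually.of_forall fun y => ?_
      have := log_pos' hn
      have hpos : 0 < cSeq n ^ 4 / (32 * Real.log n ^ 2) := by positivity
      rw [Real.norm_eq_abs, abs_div, abs_of_pos hpos, div_le_iff₀ hpos, mul_comm]
      exact (Rn_bound hn hc hln y).trans (mul_le_mul_of_nonneg_left (hm y) hpos.le)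
  rw [gumbel_int] at hmain
  refine hmain.congr' ?_
  filter_upwards [hev] with n ⟨hn, hc, hln, hm⟩
  rw [int_eq hn hc hln hm, integral_div]
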